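/- In the labeled calculus G3Kt + LabSt(GP), for any set GP of general path axioms, the following rules are admissible: substitution (if R, Γ is derivable then R[x/y], Γ[x/y] is derivable, where [x/y] replaces label y by label x and duplicate relational atoms are removed); contraction (if R, Γ, Δ, Δ is derivable then R, Γ, Δ is derivable); weakening (if R, Γ is derivable then R, Q, Γ, Δ is derivable for any relational atoms Q disjoint from R and any labeled formulae Δ); and cut (if R, Γ, x:A and R, Γ, x:Ā are both derivable, then R, Γ is derivable). -/

import Mathlib

/-! All four rules are obtained from an equivalent calculus `Der` in which an eigenvariable premise is
replaced by the family of its instances for *all* labels.  In `Der` weakening is a trivial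
induction, and every logical rule is invertible (`Der.invert`) without any renaming.

* `Der.toG3` instantiates such a family at one fresh label; `G3KtD.toDer` goes back, and proves
  derivability of every relabelling of the end sequent at once: the label required for an
  eigenvariable is absorbed into the relabelling.  Their composite is the substitution rule.
* Contraction is by induction on the formula.  For `∧`, `∨`, `□`, `■` both copies are inverted, at
  the same label for the modalities, and the pieces are contracted.  Literals and diamonds are
  never consumed by a rule, so there an induction on the derivation suffices.
* Cut is by induction on the cut formula.  Conjunctions and disjunctions are inverted on both
  sides.  For literals and diamonds the cut is pushed up the derivation containing that literal or
  diamond: invertibility lets the other premise follow each rule.  At a principal diamond with atom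
  `Rxy`, inverting the box at `y` reduces to a cut on the immediate subformula; at an initial sequent a
  literal cut reduces to a contraction.

No measure on the height of derivations is needed.
-/

set_option autoImplicit false

/-! # Common definitions: tense logics, nested/labeled/display calculi
    (following Ciabattoni, Lyon, Ramanayake, Tiu,
     "Display to Labeled Proofs and Back Again for Tense Logics") -/

/-- Diamonds: `wd` = ◇ (white diamond), `bd` = ◆ (black diamond). -/
inductive Dmd : Type
  | wd
  | bd
deriving DecidableEq, Repr

/-- Tense formulae in negation normal form:
    `A ::= p | p̄ | A ∧ A | A ∨ A | □A | ◇A | ■A | ◆A`. -/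
inductive Formula : Type
  | pos : Nat → Formula      -- propositional variable p
  | neg : Nat → Formula      -- negated propositional variable p̄
  | and : Formula → Formula → Formula
  | or : Formula → Formula → Formula
  | box : Formula → Formula   -- □
  | dia : Formula → Formula   -- ◇
  | bbox : Formula → Formula  -- ■
  | bdia : Formula → Formula  -- ◆
deriving DecidableEq, Repr

/-- The De Morgan dual `Ā` of a formula `A`. -/
def Formula.dual : Formula → Formula
  | .pos p => .neg p
  | .neg p => .pos p
  | .and A B => .or A.dual B.dual
  | .or A B => .and A.dual B.dual
  | .box A => .dia A.dual
  | .dia A => .box A.dual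
  | .bbox A => .bdia A.dual
  | .bdia A => .bbox A.dual

/-- `A → B` is defined as `Ā ∨ B`. -/
def Formula.imp (A B : Formula) : Formula := A.dual.or B

/-- `A ↔ B` is defined as `(A → B) ∧ (B → A)`. -/
def Formula.iffF (A B : Formula) : Formula := (A.imp B).and (B.imp A)

/-- `⟨?⟩A` for a diamond `⟨?⟩ ∈ {◇, ◆}`. -/
def dmdF : Dmd → Formula → Formula
  | .wd, A => .dia A
  | .bd, A => .bdia A

/-- `⟨?⟩₁…⟨?⟩ₘ A` for a string of diamonds. -/
def applyDmds : List Dmd → Formula → Formula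
  | [], A => A
  | d :: ds, A => dmdF d (applyDmds ds A)

/-- A general path axiom `ΠA → ΣA`, given by the strings `Π` (ant) and `Σ` (suc). -/
structure GenPath : Type where
  ant : List Dmd
  suc : List Dmd

/-- A path axiom `ΠA → ⟨?⟩A`. -/
structure PathAx : Type where
  ant : List Dmd
  suc : Dmd
deriving DecidableEq

/-- Every path axiom is a general path axiom. -/
def pathToGen (F : PathAx) : GenPath := ⟨F.ant, [F.suc]⟩

/-- All instances `ΠA → ΣA` of the general path axioms in `GP`. -/
def gpInstances (GP : Set GenPath) : Set Formula :=
  {F | ∃ gp ∈ GP, ∃ A : Formula, F = (applyDmds gp.ant A).imp (applyDmds gp.suc A)}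

/-- The Hilbert system `Kt + S`: classical propositional axioms, modus ponens,
    the tense axioms, and necessitation for □ and ■, plus the axioms in `S`. -/
inductive KtProof (S : Set Formula) : Formula → Prop
  | ax {A : Formula} : A ∈ S → KtProof S A
  | pl1 (A B : Formula) : KtProof S (A.imp (B.imp A))
  | pl2 (A B : Formula) : KtProof S ((B.dual.imp A.dual).imp (A.imp B))
  | pl3 (A B C : Formula) :
      KtProof S ((A.imp (B.imp C)).imp ((A.imp B).imp (A.imp C)))
  | tense1 (A : Formula) : KtProof S (A.imp (Formula.box (Formula.bdia A)))
  | tense2 (A : Formula) : KtProof S (A.imp (Formula.bbox (Formula.dia A)))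
  | kbox (A B : Formula) :
      KtProof S ((Formula.box (A.imp B)).imp ((Formula.box A).imp (Formula.box B)))
  | kbbox (A B : Formula) :
      KtProof S ((Formula.bbox (A.imp B)).imp ((Formula.bbox A).imp (Formula.bbox B)))
  | boxdual (A : Formula) :
      KtProof S ((Formula.box A).iffF (Formula.dia A.dual).dual)
  | bboxdual (A : Formula) :
      KtProof S ((Formula.bbox A).iffF (Formula.bdia A.dual).dual)
  | mp {A B : Formula} : KtProof S (A.imp B) → KtProof S A → KtProof S B
  | necbox {A : Formula} : KtProof S A → KtProof S (Formula.box A)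
  | necbbox {A : Formula} : KtProof S A → KtProof S (Formula.bbox A)

/-! ## Nested sequents -/

/-- Nested sequents: `X ::= ε | A | X, X | ∘{X} | •{X}`. -/
inductive NSeq : Type
  | empty
  | fml : Formula → NSeq
  | comma : NSeq → NSeq → NSeq
  | white : NSeq → NSeq   -- ∘{X}
  | black : NSeq → NSeq   -- •{X}
deriving DecidableEq, Repr

/-- Comma is associative and commutative with unit ε: the induced congruence. -/
inductive NEquiv : NSeq → NSeq → Prop
  | refl (X : NSeq) : NEquiv X X
  | symm {X Y : NSeq} : NEquiv X Y → NEquiv Y X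
  | trans {X Y Z : NSeq} : NEquiv X Y → NEquiv Y Z → NEquiv X Z
  | comm (X Y : NSeq) : NEquiv (X.comma Y) (Y.comma X)
  | assoc (X Y Z : NSeq) : NEquiv ((X.comma Y).comma Z) (X.comma (Y.comma Z))
  | unit (X : NSeq) : NEquiv (X.comma NSeq.empty) X
  | commaCongr {X X' Y Y' : NSeq} :
      NEquiv X X' → NEquiv Y Y' → NEquiv (X.comma Y) (X'.comma Y')
  | whiteCongr {X Y : NSeq} : NEquiv X Y → NEquiv X.white Y.white
  | blackCongr {X Y : NSeq} : NEquiv X Y → NEquiv X.black Y.black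

/-- `★₁{… ★ₙ{Y} …}` where `★ⱼ = ∘` if `⟨?⟩ⱼ = ◇` and `★ⱼ = •` if `⟨?⟩ⱼ = ◆`. -/
def nestDmds : List Dmd → NSeq → NSeq
  | [], Y => Y
  | .wd :: ds, Y => (nestDmds ds Y).white
  | .bd :: ds, Y => (nestDmds ds Y).black

/-- The structural rules `NestSt(GP)` (premise, conclusion): for each
    `ΠA → ΣA ∈ GP`, from `X, ★Σ{Y}` infer `X, ★Π{Y}`. -/
def NestSt (GP : Set GenPath) : NSeq → NSeq → Prop :=
  fun prem concl => ∃ gp ∈ GP, ∃ X Y : NSeq,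
    prem = X.comma (nestDmds gp.suc Y) ∧ concl = X.comma (nestDmds gp.ant Y)

/-- The empty set of extension rules on nested sequents. -/
def NoNest : NSeq → NSeq → Prop := fun _ _ => False

/-- The shallow nested (display) calculus `SKT` extended with the
    structural rules `Ext` (relating premise to conclusion); nested sequents are
    treated up to the congruence `NEquiv` (comma is AC with unit ε). -/
inductive SKT (Ext : NSeq → NSeq → Prop) : NSeq → Prop
  | id (X : NSeq) (p : Nat) :
      SKT Ext ((X.comma (.fml (.pos p))).comma (.fml (.neg p)))
  | orR {X : NSeq} {A B : Formula} :
      SKT Ext (X.comma ((NSeq.fml A).comma (.fml B))) →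
      SKT Ext (X.comma (.fml (.or A B)))
  | andR {X : NSeq} {A B : Formula} :
      SKT Ext (X.comma (.fml A)) → SKT Ext (X.comma (.fml B)) →
      SKT Ext (X.comma (.fml (.and A B)))
  | ctr {X Y : NSeq} : SKT Ext (X.comma (Y.comma Y)) → SKT Ext (X.comma Y)
  | wk {X Y : NSeq} : SKT Ext X → SKT Ext (X.comma Y)
  | rf {X Y : NSeq} : SKT Ext (X.comma Y.white) → SKT Ext (X.black.comma Y)
  | rp {X Y : NSeq} : SKT Ext (X.comma Y.black) → SKT Ext (X.white.comma Y)
  | bbox {X : NSeq} {A : Formula} :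
      SKT Ext (X.comma (NSeq.fml A).black) → SKT Ext (X.comma (.fml (.bbox A)))
  | box {X : NSeq} {A : Formula} :
      SKT Ext (X.comma (NSeq.fml A).white) → SKT Ext (X.comma (.fml (.box A)))
  | bdia {X Y : NSeq} {A : Formula} :
      SKT Ext ((X.comma (Y.comma (.fml A)).black).comma (.fml (.bdia A))) →
      SKT Ext ((X.comma Y.black).comma (.fml (.bdia A)))
  | dia {X Y : NSeq} {A : Formula} :
      SKT Ext ((X.comma (Y.comma (.fml A)).white).comma (.fml (.dia A))) →
      SKT Ext ((X.comma Y.white).comma (.fml (.dia A)))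
  | ext {X Y : NSeq} : Ext X Y → SKT Ext X → SKT Ext Y
  | equiv {X Y : NSeq} : SKT Ext X → NEquiv X Y → SKT Ext Y

/-! ## Deep nested calculus -/

/-- One-hole contexts over nested sequents (up to `NEquiv` this suffices). -/
inductive Ctx : Type
  | hole
  | commaL : Ctx → NSeq → Ctx
  | white : Ctx → Ctx
  | black : Ctx → Ctx

/-- Filling the hole of a context with a nested sequent. -/
def Ctx.fill : Ctx → NSeq → NSeq
  | .hole, X => X
  | .commaL C Y, X => (C.fill X).comma Y
  | .white C, X => (C.fill X).white
  | .black C, X => (C.fill X).black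

/-- The deep nested calculus `DKT` extended with rules `Ext`
    (premise, conclusion); sequents are treated up to `NEquiv`. -/
inductive DKT (Ext : NSeq → NSeq → Prop) : NSeq → Prop
  | id (C : Ctx) (p : Nat) :
      DKT Ext (C.fill ((NSeq.fml (.pos p)).comma (.fml (.neg p))))
  | andD {C : Ctx} {Y : NSeq} {A B : Formula} :
      DKT Ext (C.fill ((NSeq.fml A).comma Y)) →
      DKT Ext (C.fill ((NSeq.fml B).comma Y)) →
      DKT Ext (C.fill ((NSeq.fml (.and A B)).comma Y))
  | orD {C : Ctx} {Y : NSeq} {A B : Formula} :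
      DKT Ext (C.fill ((NSeq.fml A).comma ((NSeq.fml B).comma Y))) →
      DKT Ext (C.fill ((NSeq.fml (.or A B)).comma Y))
  | bboxD {C : Ctx} {A : Formula} :
      DKT Ext (C.fill ((NSeq.fml (.bbox A)).comma (NSeq.fml A).black)) →
      DKT Ext (C.fill (.fml (.bbox A)))
  | boxD {C : Ctx} {A : Formula} :
      DKT Ext (C.fill ((NSeq.fml (.box A)).comma (NSeq.fml A).white)) →
      DKT Ext (C.fill (.fml (.box A)))
  | bdia1 {C : Ctx} {Y : NSeq} {A : Formula} :
      DKT Ext (C.fill ((Y.comma (.fml A)).black.comma (.fml (.bdia A)))) →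
      DKT Ext (C.fill (Y.black.comma (.fml (.bdia A))))
  | bdia2 {C : Ctx} {Y : NSeq} {A : Formula} :
      DKT Ext (C.fill ((Y.comma (.fml (.bdia A))).white.comma (.fml A))) →
      DKT Ext (C.fill ((Y.comma (.fml (.bdia A))).white))
  | dia1 {C : Ctx} {Y : NSeq} {A : Formula} :
      DKT Ext (C.fill ((Y.comma (.fml A)).white.comma (.fml (.dia A)))) →
      DKT Ext (C.fill (Y.white.comma (.fml (.dia A))))
  | dia2 {C : Ctx} {Y : NSeq} {A : Formula} :
      DKT Ext (C.fill ((Y.comma (.fml (.dia A))).black.comma (.fml A))) →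
      DKT Ext (C.fill ((Y.comma (.fml (.dia A))).black))
  | ext {X Y : NSeq} : Ext X Y → DKT Ext X → DKT Ext Y
  | equiv {X Y : NSeq} : DKT Ext X → NEquiv X Y → DKT Ext Y

/-! ## Display rules and display equivalence -/

/-- `DisplayDeriv X Z`: `Z` is derivable from `X` using only the display rules
    (rf) and (rp) (and rearrangement by the comma-congruence `NEquiv`). -/
inductive DisplayDeriv : NSeq → NSeq → Prop
  | refl (X : NSeq) : DisplayDeriv X X
  | equiv {X Y Z : NSeq} : NEquiv X Y → DisplayDeriv Y Z → DisplayDeriv X Z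
  | rf {X Y Z : NSeq} :
      DisplayDeriv (X.black.comma Y) Z → DisplayDeriv (X.comma Y.white) Z
  | rp {X Y Z : NSeq} :
      DisplayDeriv (X.white.comma Y) Z → DisplayDeriv (X.comma Y.black) Z

/-- Two nested sequents are display equivalent when each is derivable from the
    other using only the display rules. -/
def DisplayEquiv (X Y : NSeq) : Prop := DisplayDeriv X Y ∧ DisplayDeriv Y X

/-! ## Labeled sequents and the labeled calculus G3Kt -/

abbrev Label : Type := Nat

/-- A set of relational atoms `Rxy`. -/
abbrev RelSet : Type := Finset (Label × Label)

/-- A labeled sequent `R, Γ`. -/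
abbrev LSeq : Type := RelSet × Multiset (Label × Formula)

/-- The label `z` occurs in the labeled sequent `S`. -/
def occursLS (z : Label) (S : LSeq) : Prop :=
  (∃ w, (z, w) ∈ S.1 ∨ (w, z) ∈ S.1) ∨ ∃ A, (z, A) ∈ S.2

/-- `R_◇ x y := Rxy` and `R_◆ x y := Ryx`. -/
def relAtom : Dmd → Label → Label → Label × Label
  | .wd, x, y => (x, y)
  | .bd, x, y => (y, x)

/-- Relational atoms of a `Π`-chain through the list of labels `ls`. -/
def chainAtoms : List Dmd → List Label → List (Label × Label)
  | d :: ds, a :: b :: rest => relAtom d a b :: chainAtoms ds (b :: rest)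
  | _, _ => []

/-- `ls` is a chain of labels for the diamond string `ds` from `x` to `y`
    (an empty string forces `x = y`). -/
def IsChainList (ds : List Dmd) (x y : Label) (ls : List Label) : Prop :=
  ls.length = ds.length + 1 ∧ ls.head? = some x ∧ ls.getLast? = some y

/-- The structural rules `LabSt(GP)` (premise, conclusion): for `ΠA → ΣA ∈ GP`,
    from `R, R_Π x y, R_Σ x y, Γ` infer `R, R_Π x y, Γ`, where all labels in
    `R_Σ x y` other than `x, y` are eigenvariables. -/
def LabSt (GP : Set GenPath) : LSeq → LSeq → Prop :=
  fun prem concl => ∃ gp ∈ GP,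
    ∃ (R : RelSet) (Γ : Multiset (Label × Formula)) (x y : Label)
      (als sls : List Label),
      IsChainList gp.ant x y als ∧ IsChainList gp.suc x y sls ∧
      concl = (R ∪ (chainAtoms gp.ant als).toFinset, Γ) ∧
      prem = (R ∪ (chainAtoms gp.ant als).toFinset ∪
                (chainAtoms gp.suc sls).toFinset, Γ) ∧
      (∀ z ∈ sls, z ≠ x → z ≠ y → ¬ occursLS z concl)

/-- The empty set of extension rules on labeled sequents. -/
def NoExt : LSeq → LSeq → Prop := fun _ _ => False

/-- Derivations in the labeled calculus `G3Kt` extended with rules `Ext`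
    (relating premise to conclusion). -/
inductive G3KtD (Ext : LSeq → LSeq → Prop) :
    RelSet → Multiset (Label × Formula) → Type
  | id (R : RelSet) (Γ : Multiset (Label × Formula)) (x : Label) (p : Nat) :
      G3KtD Ext R ((x, .pos p) ::ₘ (x, .neg p) ::ₘ Γ)
  | orR (R : RelSet) (Γ : Multiset (Label × Formula)) (x : Label) (A B : Formula)
      (D : G3KtD Ext R ((x, A) ::ₘ (x, B) ::ₘ Γ)) :
      G3KtD Ext R ((x, .or A B) ::ₘ Γ)
  | andR (R : RelSet) (Γ : Multiset (Label × Formula)) (x : Label) (A B : Formula)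
      (D1 : G3KtD Ext R ((x, A) ::ₘ Γ)) (D2 : G3KtD Ext R ((x, B) ::ₘ Γ)) :
      G3KtD Ext R ((x, .and A B) ::ₘ Γ)
  | boxR (R : RelSet) (Γ : Multiset (Label × Formula)) (x y : Label) (A : Formula)
      (hy : ¬ occursLS y (R, (x, Formula.box A) ::ₘ Γ))
      (D : G3KtD Ext (insert (x, y) R) ((y, A) ::ₘ Γ)) :
      G3KtD Ext R ((x, .box A) ::ₘ Γ)
  | diaR (R : RelSet) (Γ : Multiset (Label × Formula)) (x y : Label) (A : Formula)
      (h : (x, y) ∈ R)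
      (D : G3KtD Ext R ((y, A) ::ₘ (x, Formula.dia A) ::ₘ Γ)) :
      G3KtD Ext R ((x, .dia A) ::ₘ Γ)
  | bboxR (R : RelSet) (Γ : Multiset (Label × Formula)) (x y : Label) (A : Formula)
      (hy : ¬ occursLS y (R, (x, Formula.bbox A) ::ₘ Γ))
      (D : G3KtD Ext (insert (y, x) R) ((y, A) ::ₘ Γ)) :
      G3KtD Ext R ((x, .bbox A) ::ₘ Γ)
  | bdiaR (R : RelSet) (Γ : Multiset (Label × Formula)) (x y : Label) (A : Formula)
      (h : (y, x) ∈ R)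
      (D : G3KtD Ext R ((y, A) ::ₘ (x, Formula.bdia A) ::ₘ Γ)) :
      G3KtD Ext R ((x, .bdia A) ::ₘ Γ)
  | ext (R' : RelSet) (Γ' : Multiset (Label × Formula))
      (R : RelSet) (Γ : Multiset (Label × Formula))
      (h : Ext (R', Γ') (R, Γ)) (D : G3KtD Ext R' Γ') : G3KtD Ext R Γ

/-- Derivability in `G3Kt + Ext`. -/
def G3KtDeriv (Ext : LSeq → LSeq → Prop) (R : RelSet)
    (Γ : Multiset (Label × Formula)) : Prop :=
  Nonempty (G3KtD Ext R Γ)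

/-- `Q` holds of every labeled sequent occurring in the derivation `D`
    (including the end sequent). -/
def G3KtD.allSeq {Ext : LSeq → LSeq → Prop} (Q : LSeq → Prop) :
    ∀ {R : RelSet} {Γ : Multiset (Label × Formula)}, G3KtD Ext R Γ → Prop
  | _, _, .id R Γ x p => Q (R, (x, .pos p) ::ₘ (x, .neg p) ::ₘ Γ)
  | _, _, .orR R Γ x A B D => Q (R, (x, .or A B) ::ₘ Γ) ∧ D.allSeq Q
  | _, _, .andR R Γ x A B D1 D2 =>
      Q (R, (x, .and A B) ::ₘ Γ) ∧ D1.allSeq Q ∧ D2.allSeq Q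
  | _, _, .boxR R Γ x _ A _ D => Q (R, (x, .box A) ::ₘ Γ) ∧ D.allSeq Q
  | _, _, .diaR R Γ x _ A _ D => Q (R, (x, .dia A) ::ₘ Γ) ∧ D.allSeq Q
  | _, _, .bboxR R Γ x _ A _ D => Q (R, (x, .bbox A) ::ₘ Γ) ∧ D.allSeq Q
  | _, _, .bdiaR R Γ x _ A _ D => Q (R, (x, .bdia A) ::ₘ Γ) ∧ D.allSeq Q
  | _, _, .ext _ _ R Γ _ D => Q (R, Γ) ∧ D.allSeq Q

/-! ## Paths, inverses, compositions, completion, propagation rules -/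

/-- The inverse of a diamond: `◇⁻¹ = ◆` and `◆⁻¹ = ◇`. -/
def Dmd.inv : Dmd → Dmd
  | .wd => .bd
  | .bd => .wd

/-- The inverse `I(F)` of a path axiom `F`. -/
def PathAx.inv (F : PathAx) : PathAx := ⟨(F.ant.map Dmd.inv).reverse, F.suc.inv⟩

/-- `I(P)`, the set of inverses of the path axioms in `P`. -/
def invSet (P : Set PathAx) : Set PathAx := {F | ∃ G ∈ P, F = G.inv}

/-- The completion `P*`: the smallest set of path axioms containing `P`,
    containing `◇A → ◇A` and `◆A → ◆A`, and closed under compositions. -/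
inductive Completion (P : Set PathAx) : PathAx → Prop
  | base {F : PathAx} : F ∈ P → Completion P F
  | wrefl : Completion P ⟨[Dmd.wd], Dmd.wd⟩
  | brefl : Completion P ⟨[Dmd.bd], Dmd.bd⟩
  | comp {F G : PathAx} (i : Nat) (hi : i < G.ant.length) :
      Completion P F → Completion P G → G.ant.get ⟨i, hi⟩ = F.suc →
      Completion P ⟨G.ant.take i ++ F.ant ++ G.ant.drop (i + 1), G.suc⟩

/-- `(P ∪ I(P))*`. -/
def PStar (P : Set PathAx) : PathAx → Prop := Completion (P ∪ invSet P)

/-- A path from `x` to `y` with the given string of diamonds in the propagation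
    graph determined by the edge set `E`: each `Rxy` contributes the labeled
    edges `(x, y, ◇)` and `(y, x, ◆)`. -/
inductive LPath (E : Finset (Label × Label)) : Label → Label → List Dmd → Prop
  | nil (x : Label) : LPath E x x []
  | fwd {x z y : Label} {ds : List Dmd} :
      (x, z) ∈ E → LPath E z y ds → LPath E x y (Dmd.wd :: ds)
  | bwd {x z y : Label} {ds : List Dmd} :
      (z, x) ∈ E → LPath E z y ds → LPath E x y (Dmd.bd :: ds)

/-- The labeled propagation rules `LabPr(P)` (premise, conclusion):
    from `R, x:⟨?⟩A, y:A, Γ` infer `R, x:⟨?⟩A, Γ`, provided there is a path `π`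
    from `x` to `y` in the propagation graph of the premise whose string `Π`
    satisfies `ΠA → ⟨?⟩A ∈ (P ∪ I(P))*`. -/
def LabPr (P : Set PathAx) : LSeq → LSeq → Prop :=
  fun prem concl =>
    ∃ (R : RelSet) (Γ : Multiset (Label × Formula)) (x y : Label)
      (A : Formula) (d : Dmd) (Pi : List Dmd),
      prem = (R, (x, dmdF d A) ::ₘ (y, A) ::ₘ Γ) ∧
      concl = (R, (x, dmdF d A) ::ₘ Γ) ∧
      LPath R x y Pi ∧ PStar P ⟨Pi, d⟩

/-! ## Labeled graphs, labeled polytrees, and the translations 𝔏 and 𝔑 -/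

/-- A labeled graph `(V, E, L)`: vertices decorated with multisets of formulae. -/
structure LGraph : Type where
  V : Finset Label
  E : Finset (Label × Label)
  L : Label → Multiset Formula

/-- Union of labeled graphs (multiset union of labels at shared vertices). -/
def LGraph.union (G H : LGraph) : LGraph :=
  ⟨G.V ∪ H.V, G.E ∪ H.E, fun z => G.L z + H.L z⟩

/-- Isomorphism of labeled graphs: a bijection between the vertex sets
    preserving edges and vertex labels. -/
def LGraph.Iso (G H : LGraph) : Prop :=
  ∃ f : Label → Label, Set.BijOn f ↑G.V ↑H.V ∧
    (∀ u ∈ G.V, ∀ v ∈ G.V, ((u, v) ∈ G.E ↔ (f u, f v) ∈ H.E)) ∧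
    (∀ v ∈ G.V, G.L v = H.L (f v))

/-- A labeled graph is a labeled polytree when its underlying undirected
    graph is a tree. -/
def LGraph.IsPolytree (G : LGraph) : Prop :=
  (∀ x y : Label, (x, y) ∈ G.E → (y, x) ∉ G.E) ∧
  (∀ e ∈ G.E, e.1 ∈ G.V ∧ e.2 ∈ G.V) ∧
  ((SimpleGraph.fromRel fun a b => (a, b) ∈ G.E).induce (↑G.V : Set Label)).IsTree

/-- The translation `𝔏ₓ` from nested sequents to labeled graphs (relational,
    since fresh vertices may be chosen arbitrarily): `LabT x X G` states that
    `G` is a labeled graph obtained by translating `X` starting at vertex `x`. -/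
inductive LabT : Label → NSeq → LGraph → Prop
  | empty (x : Label) : LabT x .empty ⟨∅, ∅, fun _ => 0⟩
  | fml (x : Label) (A : Formula) :
      LabT x (.fml A) ⟨{x}, ∅, fun z => if z = x then {A} else 0⟩
  | comma {x : Label} {X Y : NSeq} {G H : LGraph} :
      LabT x X G → LabT x Y H → G.V ∩ H.V ⊆ {x} →
      LabT x (X.comma Y) (G.union H)
  | white {x y : Label} {X : NSeq} {G : LGraph} :
      LabT y X G → x ∉ G.V → x ≠ y →
      LabT x X.white ⟨insert x (insert y G.V), insert (x, y) G.E, G.L⟩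
  | black {x y : Label} {X : NSeq} {G : LGraph} :
      LabT y X G → x ∉ G.V → x ≠ y →
      LabT x X.black ⟨insert x (insert y G.V), insert (y, x) G.E, G.L⟩

/-- The translation `𝔑ₓ` from labeled polytrees (rooted at a chosen vertex `x`)
    to nested sequents: the inverse of the translation `𝔏ₓ`. -/
def NTrans (x : Label) (G : LGraph) (X : NSeq) : Prop := LabT x X G

/-- The labeled graph of a labeled sequent `R, Γ`: vertices are the occurring
    labels, edges are given by `R`, and each vertex `x` is labeled by the
    multiset `{A | x:A ∈ Γ}`. -/
def toLGraph (R : RelSet) (Γ : Multiset (Label × Formula)) : LGraph where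
  V := R.image Prod.fst ∪ R.image Prod.snd ∪ (Γ.map Prod.fst).toFinset
  E := R
  L := fun z => (Γ.filter fun p => p.1 = z).map Prod.snd

/-- The multiset of labeled formulae of a labeled graph, read as a sequent. -/
def LGraph.toSeqGamma (G : LGraph) : Multiset (Label × Formula) :=
  G.V.val.bind fun v => (G.L v).map fun A => (v, A)

/-- The set of labels occurring in a labeled sequent. -/
def seqLabels (R : RelSet) (Γ : Multiset (Label × Formula)) : Set Label :=
  {z | (∃ w, (z, w) ∈ R ∨ (w, z) ∈ R) ∨ ∃ A, (z, A) ∈ Γ}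

/-- `R, Γ` is a labeled polytree sequent: its underlying undirected graph
    (on the occurring labels) is a tree. -/
def IsPolytreeSeq (R : RelSet) (Γ : Multiset (Label × Formula)) : Prop :=
  (∀ x y : Label, (x, y) ∈ R → (y, x) ∉ R) ∧
  ((SimpleGraph.fromRel fun a b => (a, b) ∈ R).induce (seqLabels R Γ)).IsTree

/-- The labeled edges `(u, v, ◇)` and `(v, u, ◆)` of the propagation graph
    determined by an edge set. -/
def propEdges (E : Finset (Label × Label)) : Set (Label × Label × Dmd) :=
  {e | ∃ u v : Label, (u, v) ∈ E ∧ (e = (u, v, Dmd.wd) ∨ e = (v, u, Dmd.bd))}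

/-- The deep propagation rules `DeepPr(P)` (premise, conclusion), expressed via
    the labeled polytree representation of nested sequents: from
    `X[⟨?⟩A]ᵢ[A]ⱼ` infer `X[⟨?⟩A]ᵢ[∅]ⱼ`, provided there is a path from node `i`
    (= `u`) to node `j` (= `v`) in the propagation graph of the premise whose
    string `Π` satisfies `ΠA → ⟨?⟩A ∈ (P ∪ I(P))*`. -/
def DeepPrL (P : Set PathAx) : NSeq → NSeq → Prop :=
  fun prem concl =>
    ∃ (r : Label) (G : LGraph) (u v : Label) (A : Formula) (d : Dmd)
      (Pi : List Dmd),
      LabT r prem G ∧ LPath G.E u v Pi ∧ PStar P ⟨Pi, d⟩ ∧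
      dmdF d A ∈ G.L u ∧ A ∈ G.L v ∧
      LabT r concl ⟨G.V, G.E, fun z => if z = v then (G.L v).erase A else G.L z⟩

/-- Substitution of the label `y` by the label `x`. -/
def subLabel (x y z : Label) : Label := if z = y then x else z

/-! ### The calculus with universally instantiated premises -/

/-- Labeled formulae `x : A`. -/
abbrev LFml : Type := Label × Formula

/-- `Dec R F ps`: in a sequent with relational atoms `R`, some logical rule has principal formula
`F`, and its premises add to the context exactly the pairs (new atoms, new formulae) in `ps`.  For
`□` and `■` the family `ps` ranges over all labels in place of the eigenvariable. -/
inductive Dec (R : RelSet) : LFml → Set (RelSet × Multiset LFml) → Prop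
  | or (x : Label) (A B : Formula) : Dec R (x, .or A B) {(∅, {(x, A), (x, B)})}
  | and (x : Label) (A B : Formula) : Dec R (x, .and A B) {(∅, {(x, A)}), (∅, {(x, B)})}
  | box (x : Label) (A : Formula) :
      Dec R (x, .box A) (Set.range fun y : Label => ({(x, y)}, {(y, A)}))
  | bbox (x : Label) (A : Formula) :
      Dec R (x, .bbox A) (Set.range fun y : Label => ({(y, x)}, {(y, A)}))
  | dia (x y : Label) (A : Formula) (h : (x, y) ∈ R) :
      Dec R (x, .dia A) {(∅, {(y, A), (x, .dia A)})}
  | bdia (x y : Label) (A : Formula) (h : (y, x) ∈ R) :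
      Dec R (x, .bdia A) {(∅, {(y, A), (x, .bdia A)})}

/-- Derivability in the calculus whose eigenvariable premises are required for all labels.  In
`ext` the list `tl`, from `a` to `b`, is a template for the chain `R_Σ x y`: its instances are the
images `tl.map f` with `f a = x` and `f b = y`.  The hypothesis `hex`, that there is an instance,
only excludes `a = b` with `x ≠ y`, where the premise would be vacuous. -/
inductive Der (GP : Set GenPath) : RelSet → Multiset LFml → Prop
  | id {R : RelSet} {Γ : Multiset LFml} (x : Label) (p : Nat)
      (h1 : (x, Formula.pos p) ∈ Γ) (h2 : (x, Formula.neg p) ∈ Γ) : Der GP R Γ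
  | log {R : RelSet} {Γ : Multiset LFml} {F : LFml} {ps : Set (RelSet × Multiset LFml)}
      (hd : Dec R F ps) (hp : ∀ p ∈ ps, Der GP (R ∪ p.1) (p.2 + Γ)) : Der GP R (F ::ₘ Γ)
  | ext {R : RelSet} {Γ : Multiset LFml} {gp : GenPath} (hgp : gp ∈ GP)
      {x y a b : Label} {als tl : List Label}
      (hals : IsChainList gp.ant x y als) (hR : (chainAtoms gp.ant als).toFinset ⊆ R)
      (htl : IsChainList gp.suc a b tl) (hex : ∃ f : Label → Label, f a = x ∧ f b = y)
      (hp : ∀ f : Label → Label, f a = x → f b = y →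
        Der GP (R ∪ (chainAtoms gp.suc (tl.map f)).toFinset) Γ) : Der GP R Γ

theorem Dec.mono {R R' : RelSet} (h : R ⊆ R') {F : LFml} {ps : Set (RelSet × Multiset LFml)}
    (hd : Dec R F ps) : Dec R' F ps := by
  cases hd
  case dia x y A hxy => exact .dia x y A (h hxy)
  case bdia x y A hxy => exact .bdia x y A (h hxy)
  all_goals constructor

/-- A formula is persistent when no rule consumes it, as is the case of literals and diamonds. -/
def Persistent (F : LFml) : Prop :=
  ∀ (R : RelSet) (ps : Set (RelSet × Multiset LFml)), Dec R F ps → ∀ p ∈ ps, F ∈ p.2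

section
variable {GP : Set GenPath}

/-! ### Weakening and inversion -/

theorem Der.weaken {R : RelSet} {Γ : Multiset LFml} (h : Der GP R Γ) :
    ∀ {R' : RelSet}, R ⊆ R' → ∀ Δ : Multiset LFml, Der GP R' (Γ + Δ) := by
  induction h with
  | id x p h1 h2 =>
    intro R' _ Δ
    exact .id x p (Multiset.mem_add.2 (.inl h1)) (Multiset.mem_add.2 (.inl h2))
  | log hd hp ih =>
    intro R' hR Δ
    rw [Multiset.cons_add]
    refine .log (hd.mono hR) fun p hps => ?_
    rw [← add_assoc]
    exact ih p hps (Finset.union_subset_union_left hR) Δ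
  | ext hgp hals hR0 htl hex hp ih =>
    intro R' hR Δ
    exact .ext hgp hals (hR0.trans hR) htl hex fun f h1 h2 =>
      ih f h1 h2 (Finset.union_subset_union_left hR) Δ

theorem Der.weaken_le {R R' : RelSet} {Γ Γ' : Multiset LFml} (h : Der GP R Γ) (hR : R ⊆ R')
    (hΓ : Γ ≤ Γ') : Der GP R' Γ' := by
  obtain ⟨Δ, rfl⟩ := Multiset.le_iff_exists_add.1 hΓ
  exact h.weaken hR Δ

/-- Inversion for a formula whose only decomposition, in any sequent, is the given one. -/
theorem Der.invert_aux {F : LFml} {ps : Set (RelSet × Multiset LFml)}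
    (hpos : ∀ x p, F ≠ (x, .pos p)) (hneg : ∀ x p, F ≠ (x, .neg p))
    (huniq : ∀ R qs, Dec R F qs → qs = ps) {p : RelSet × Multiset LFml} (hp : p ∈ ps)
    {R : RelSet} {Γ : Multiset LFml} (h : Der GP R Γ) :
    ∀ Γ0, Γ = F ::ₘ Γ0 → Der GP (R ∪ p.1) (p.2 + Γ0) := by
  induction h with
  | id x q h1 h2 =>
    rintro Γ0 rfl
    have h1' := (Multiset.mem_cons.1 h1).resolve_left (hpos x q).symm
    have h2' := (Multiset.mem_cons.1 h2).resolve_left (hneg x q).symm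
    exact .id x q (Multiset.mem_add.2 (.inr h1')) (Multiset.mem_add.2 (.inr h2'))
  | @log R Γ G qs hd hq ih =>
    intro Γ0 he
    rcases Multiset.cons_eq_cons.1 he with ⟨rfl, rfl⟩ | ⟨-, cs, rfl, rfl⟩
    · exact hq p (huniq _ _ hd ▸ hp)
    · rw [Multiset.add_cons]
      refine .log (hd.mono Finset.subset_union_left) fun q hqs => ?_
      have := ih q hqs (q.2 + cs) (Multiset.add_cons _ _ _)
      rwa [Finset.union_right_comm, add_left_comm] at this
  | ext hgp hals hR0 htl hex hq ih =>
    intro Γ0 he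
    refine .ext hgp hals (hR0.trans Finset.subset_union_left) htl hex fun f h1 h2 => ?_
    have := ih f h1 h2 Γ0 he
    rwa [Finset.union_right_comm] at this

/-- All logical rules are invertible. -/
theorem Der.invert {F : LFml} {R : RelSet} {ps : Set (RelSet × Multiset LFml)} (hd : Dec R F ps)
    {p : RelSet × Multiset LFml} (hp : p ∈ ps) {Γ : Multiset LFml}
    (h : Der GP R (F ::ₘ Γ)) : Der GP (R ∪ p.1) (p.2 + Γ) := by
  cases hd
  -- the premise of a diamond rule is a weakening of its conclusion
  case dia x y A hxy =>
    obtain rfl := Set.mem_singleton_iff.1 hp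
    exact h.weaken_le Finset.subset_union_left (by
      simpa using Multiset.le_cons_self ((x, Formula.dia A) ::ₘ Γ) (y, A))
  case bdia x y A hxy =>
    obtain rfl := Set.mem_singleton_iff.1 hp
    exact h.weaken_le Finset.subset_union_left (by
      simpa using Multiset.le_cons_self ((x, Formula.bdia A) ::ₘ Γ) (y, A))
  all_goals
    refine Der.invert_aux (by simp) (by simp) ?_ hp h Γ rfl
    intro R qs hq
    cases hq
    rfl

/-! ### Contraction -/

theorem persistent_pos (x : Label) (p : Nat) : Persistent (x, .pos p) := by
  intro R ps h; cases h

theorem persistent_neg (x : Label) (p : Nat) : Persistent (x, .neg p) := by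
  intro R ps h; cases h

theorem persistent_dia (x : Label) (A : Formula) : Persistent (x, .dia A) := by
  intro R ps h p hp; cases h; obtain rfl := Set.mem_singleton_iff.1 hp; simp

theorem persistent_bdia (x : Label) (A : Formula) : Persistent (x, .bdia A) := by
  intro R ps h p hp; cases h; obtain rfl := Set.mem_singleton_iff.1 hp; simp

theorem Der.contract_persistent {F : LFml} (hF : Persistent F) {R : RelSet} {Γ : Multiset LFml}
    (h : Der GP R Γ) : ∀ Γ0, Γ = F ::ₘ Γ0 → F ∈ Γ0 → Der GP R Γ0 := by
  induction h with
  | id x p h1 h2 =>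
    rintro Γ0 rfl hm
    have key : ∀ G, G ∈ F ::ₘ Γ0 → G ∈ Γ0 := fun G hG => by
      rcases Multiset.mem_cons.1 hG with rfl | hG
      exacts [hm, hG]
    exact .id x p (key _ h1) (key _ h2)
  | @log R Γ G qs hd hq ih =>
    intro Γ0 he hm
    rcases Multiset.cons_eq_cons.1 he with ⟨rfl, rfl⟩ | ⟨hne, cs, rfl, rfl⟩
    · obtain ⟨Γ1, rfl⟩ := Multiset.exists_cons_of_mem hm
      exact .log hd fun q hqs => ih q hqs (q.2 + Γ1) (Multiset.add_cons _ _ _)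
        (Multiset.mem_add.2 (.inl (hF _ _ hd q hqs)))
    · have hm' := (Multiset.mem_cons.1 hm).resolve_left hne.symm
      exact .log hd fun q hqs => ih q hqs (q.2 + cs) (Multiset.add_cons _ _ _)
        (Multiset.mem_add.2 (.inr hm'))
  | ext hgp hals hR0 htl hex hq ih =>
    intro Γ0 he hm
    exact .ext hgp hals hR0 htl hex fun f h1 h2 => ih f h1 h2 Γ0 he hm

/-- Contraction is admissible for the labeled formula `F`. -/
def Ctr (GP : Set GenPath) (F : LFml) : Prop :=
  ∀ (R : RelSet) (Γ : Multiset LFml), Der GP R (F ::ₘ F ::ₘ Γ) → Der GP R (F ::ₘ Γ)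

theorem Persistent.ctr {F : LFml} (hF : Persistent F) : Ctr GP F := fun _ _ h =>
  h.contract_persistent hF _ rfl (Multiset.mem_cons_self _ _)

theorem Ctr.multiset {Δ : Multiset LFml} :
    (∀ F ∈ Δ, Ctr GP F) → ∀ {R : RelSet} {Γ : Multiset LFml},
      Der GP R (Δ + (Δ + Γ)) → Der GP R (Δ + Γ) := by
  induction Δ using Multiset.induction with
  | empty => intro _ R Γ h; simpa using h
  | cons F Δ ih =>
    intro hΔ R Γ h
    have h1 : Der GP R (F ::ₘ F ::ₘ (Δ + (Δ + Γ))) := by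
      simpa only [Multiset.cons_add, Multiset.add_cons] using h
    have h2 : Der GP R (Δ + (Δ + (F ::ₘ Γ))) := by
      simpa only [Multiset.cons_add, Multiset.add_cons] using
        hΔ F (Multiset.mem_cons_self _ _) _ _ h1
    have h3 := ih (fun G hG => hΔ G (Multiset.mem_cons_of_mem hG)) h2
    simpa only [Multiset.cons_add, Multiset.add_cons] using h3

/-- Contraction for `F` from contraction for the formulae produced by decomposing `F`. -/
theorem ctr_of_dec {F : LFml} {ps : Set (RelSet × Multiset LFml)} (hd : ∀ R, Dec R F ps)
    (hps : ∀ p ∈ ps, ∀ G ∈ p.2, Ctr GP G) : Ctr GP F := by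
  intro R Γ h
  refine .log (hd R) fun p hp => Ctr.multiset (hps p hp) ?_
  have h1 := Der.invert (hd R) hp h
  rw [Multiset.add_cons] at h1
  have h2 := Der.invert (hd _) hp h1
  rwa [Finset.union_assoc, Finset.union_self] at h2

theorem ctr (A : Formula) : ∀ x : Label, Ctr GP (x, A) := by
  induction A with
  | pos p => exact fun x => (persistent_pos x p).ctr
  | neg p => exact fun x => (persistent_neg x p).ctr
  | dia A _ => exact fun x => (persistent_dia x A).ctr
  | bdia A _ => exact fun x => (persistent_bdia x A).ctr
  | and A B ihA ihB =>
    intro x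
    refine ctr_of_dec (fun R => .and x A B) ?_
    rintro p (rfl | rfl) G hG
    · obtain rfl := Multiset.mem_singleton.1 hG
      exact ihA x
    · obtain rfl := Multiset.mem_singleton.1 hG
      exact ihB x
  | or A B ihA ihB =>
    intro x
    refine ctr_of_dec (fun R => .or x A B) ?_
    rintro p rfl G hG
    rcases (Multiset.mem_cons (s := {(x, B)})).1 hG with rfl | hG
    · exact ihA x
    · obtain rfl := Multiset.mem_singleton.1 hG
      exact ihB x
  | box A ih =>
    intro x
    refine ctr_of_dec (fun R => .box x A) ?_
    rintro p ⟨y, rfl⟩ G hG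
    obtain rfl := Multiset.mem_singleton.1 hG
    exact ih y
  | bbox A ih =>
    intro x
    refine ctr_of_dec (fun R => .bbox x A) ?_
    rintro p ⟨y, rfl⟩ G hG
    obtain rfl := Multiset.mem_singleton.1 hG
    exact ih y

/-! ### Cut -/

/-- Cut is admissible for the pair of labeled formulae `F`, `F'`. -/
def Cut (GP : Set GenPath) (F F' : LFml) : Prop :=
  ∀ (R : RelSet) (Γ : Multiset LFml), Der GP R (F ::ₘ Γ) → Der GP R (F' ::ₘ Γ) → Der GP R Γ

theorem Cut.symm {F F' : LFml} (h : Cut GP F F') : Cut GP F' F := fun R Γ h1 h2 => h R Γ h2 h1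

/-- Permuting a cut upwards along the derivation containing `F`.  Only the steps in which `F` itself
is principal have to be supplied: initial sequents (`hid`), and logical rules (`hlog`), where the cut
has already been carried out in the premises. -/
theorem cut_permute {F F' : LFml}
    (hid : ∀ R Γ x p, (x, Formula.pos p) ∈ F ::ₘ Γ → (x, Formula.neg p) ∈ F ::ₘ Γ →
      Der GP R (F' ::ₘ Γ) → Der GP R Γ)
    (hlog : ∀ R Γ ps, Dec R F ps → Der GP R (F' ::ₘ Γ) →
      (∀ p ∈ ps, ∀ Δ, p.2 = F ::ₘ Δ → Der GP (R ∪ p.1) (Δ + Γ)) → Der GP R Γ)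
    {R : RelSet} {Γ : Multiset LFml} (h : Der GP R Γ) :
    ∀ Γ0, Γ = F ::ₘ Γ0 → Der GP R (F' ::ₘ Γ0) → Der GP R Γ0 := by
  induction h with
  | id x p h1 h2 =>
    rintro Γ0 rfl h'
    exact hid _ _ x p h1 h2 h'
  | @log R Γ G qs hd hq ih =>
    intro Γ0 he h'
    rcases Multiset.cons_eq_cons.1 he with ⟨rfl, rfl⟩ | ⟨-, cs, rfl, rfl⟩
    · refine hlog _ _ _ hd h' fun q hqs Δ hΔ => ih q hqs _ (by rw [hΔ, Multiset.cons_add]) ?_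
      exact h'.weaken_le Finset.subset_union_left
        (Multiset.cons_le_cons _ (Multiset.le_add_left _ _))
    · refine .log hd fun q hqs => ih q hqs _ (Multiset.add_cons _ _ _) ?_
      rw [Multiset.cons_swap] at h'
      simpa only [Multiset.add_cons] using h'.invert hd hqs
  | ext hgp hals hR0 htl hex hq ih =>
    intro Γ0 he h'
    exact .ext hgp hals hR0 htl hex fun f h1 h2 =>
      ih f h1 h2 Γ0 he (h'.weaken_le Finset.subset_union_left le_rfl)

theorem cut_literal (x : Label) (p : Nat) : Cut GP (x, .pos p) (x, .neg p) := by
  intro R Γ h h'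
  refine cut_permute ?_ ?_ h Γ rfl h'
  · intro R Γ z q h1 h2 h'
    have h2' := (Multiset.mem_cons.1 h2).resolve_left (by simp)
    rcases Multiset.mem_cons.1 h1 with he | hpos
    · cases he
      -- the cut literal is principal: its dual already occurs in the context
      exact h'.contract_persistent (persistent_neg x p) _ rfl h2'
    · exact .id z q hpos h2'
  · intro R Γ ps hd
    cases hd

theorem cut_dia {A A' : Formula} (hc : ∀ y, Cut GP (y, A) (y, A')) (x : Label) :
    Cut GP (x, .dia A) (x, .box A') := by
  intro R Γ h h'
  refine cut_permute ?_ ?_ h Γ rfl h'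
  · intro R Γ z q h1 h2 _
    exact .id z q ((Multiset.mem_cons.1 h1).resolve_left (by simp))
      ((Multiset.mem_cons.1 h2).resolve_left (by simp))
  · intro R Γ ps hd h' hp
    cases hd with
    | dia _ y _ hxy =>
      refine hc y R Γ ?_ ?_
      · simpa using hp _ rfl {(y, A)} (Multiset.cons_swap (y, A) (x, .dia A) 0)
      · have := h'.invert (.box x A') ⟨y, rfl⟩
        simpa [Finset.union_eq_left.2 (Finset.singleton_subset_iff.2 hxy)] using this

theorem cut_bdia {A A' : Formula} (hc : ∀ y, Cut GP (y, A) (y, A')) (x : Label) :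
    Cut GP (x, .bdia A) (x, .bbox A') := by
  intro R Γ h h'
  refine cut_permute ?_ ?_ h Γ rfl h'
  · intro R Γ z q h1 h2 _
    exact .id z q ((Multiset.mem_cons.1 h1).resolve_left (by simp))
      ((Multiset.mem_cons.1 h2).resolve_left (by simp))
  · intro R Γ ps hd h' hp
    cases hd with
    | bdia _ y _ hxy =>
      refine hc y R Γ ?_ ?_
      · simpa using hp _ rfl {(y, A)} (Multiset.cons_swap (y, A) (x, .bdia A) 0)
      · have := h'.invert (.bbox x A') ⟨y, rfl⟩
        simpa [Finset.union_eq_left.2 (Finset.singleton_subset_iff.2 hxy)] using this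

theorem cut_and {A A' B B' : Formula} {x : Label} (hA : Cut GP (x, A) (x, A'))
    (hB : Cut GP (x, B) (x, B')) : Cut GP (x, .and A B) (x, .or A' B') := by
  intro R Γ h h'
  have h1 : Der GP R ((x, A) ::ₘ Γ) := by
    simpa using h.invert (.and x A B) (Set.mem_insert _ _)
  have h2 : Der GP R ((x, B) ::ₘ Γ) := by
    simpa using h.invert (.and x A B) (Set.mem_insert_of_mem _ rfl)
  have h3 : Der GP R ((x, A') ::ₘ (x, B') ::ₘ Γ) := by
    simpa using h'.invert (.or x A' B') rfl
  refine hB R Γ h2 (hA R _ ?_ h3)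
  exact h1.weaken_le subset_rfl (Multiset.cons_le_cons _ (Multiset.le_cons_self _ _))

theorem cut (A : Formula) : ∀ x : Label, Cut GP (x, A) (x, A.dual) := by
  induction A with
  | pos p => exact fun x => cut_literal x p
  | neg p => exact fun x => (cut_literal x p).symm
  | and A B ihA ihB => exact fun x => cut_and (ihA x) (ihB x)
  | or A B ihA ihB => exact fun x => (cut_and (ihA x).symm (ihB x).symm).symm
  | dia A ih => exact fun x => cut_dia ih x
  | bdia A ih => exact fun x => cut_bdia ih x
  | box A ih => exact fun x => (cut_dia (fun y => (ih y).symm) x).symm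
  | bbox A ih => exact fun x => (cut_bdia (fun y => (ih y).symm) x).symm

/-! ### Relabelling and the equivalence of the two calculi -/

/-- Relabelling of relational atoms; atoms that become equal are identified. -/
def renR (σ : Label → Label) (R : RelSet) : RelSet := R.image fun p => (σ p.1, σ p.2)

/-- Relabelling of a multiset of labeled formulae. -/
def renG (σ : Label → Label) (Γ : Multiset LFml) : Multiset LFml := Γ.map fun p => (σ p.1, p.2)

theorem renR_congr {σ τ : Label → Label} {R : RelSet} {Γ : Multiset LFml}
    (h : ∀ z, occursLS z (R, Γ) → σ z = τ z) : renR σ R = renR τ R := by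
  refine Finset.image_congr fun p hp => ?_
  exact Prod.ext (h _ (.inl ⟨p.2, .inl hp⟩)) (h _ (.inl ⟨p.1, .inr hp⟩))

theorem renG_congr {σ τ : Label → Label} {R : RelSet} {Γ : Multiset LFml}
    (h : ∀ z, occursLS z (R, Γ) → σ z = τ z) : renG σ Γ = renG τ Γ :=
  Multiset.map_congr rfl fun p hp => Prod.ext (h _ (.inr ⟨p.2, hp⟩)) rfl

theorem chainAtoms_map (σ : Label → Label) (ds : List Dmd) :
    ∀ ls : List Label, chainAtoms ds (ls.map σ) =
      (chainAtoms ds ls).map fun p => (σ p.1, σ p.2) := by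
  induction ds with
  | nil => intro ls; simp [chainAtoms]
  | cons d ds ih =>
    intro ls
    match ls with
    | [] => simp [chainAtoms]
    | [a] => simp [chainAtoms]
    | a :: b :: rest =>
      have := ih (b :: rest)
      simp only [List.map_cons] at this
      cases d <;> simp [chainAtoms, relAtom, this]

theorem renR_union (σ : Label → Label) (R S : RelSet) :
    renR σ (R ∪ S) = renR σ R ∪ renR σ S := Finset.image_union _ _

theorem renR_chain (σ : Label → Label) (ds : List Dmd) (ls : List Label) :
    renR σ (chainAtoms ds ls).toFinset = (chainAtoms ds (ls.map σ)).toFinset := by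
  ext p
  simp [renR, chainAtoms_map]

theorem IsChainList.map (σ : Label → Label) {ds : List Dmd} {x y : Label} {ls : List Label}
    (h : IsChainList ds x y ls) : IsChainList ds (σ x) (σ y) (ls.map σ) := by
  obtain ⟨h1, h2, h3⟩ := h
  exact ⟨by simpa using h1, by simp [h2], by simp [h3]⟩

theorem exists_fresh (S : LSeq) : ∃ z, ¬ occursLS z S := by
  obtain ⟨z, hz⟩ := Infinite.exists_notMem_finset
    (S.1.image Prod.fst ∪ S.1.image Prod.snd ∪ (S.2.map Prod.fst).toFinset)
  refine ⟨z, ?_⟩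
  rintro (⟨w, h | h⟩ | ⟨A, h⟩) <;> apply hz <;> simp only [Finset.mem_union, Finset.mem_image,
    Multiset.mem_toFinset, Multiset.mem_map]
  · exact .inl (.inl ⟨_, h, rfl⟩)
  · exact .inl (.inr ⟨_, h, rfl⟩)
  · exact .inr ⟨_, h, rfl⟩

/-- Every relabelling of a `G3Kt`-derivable sequent is `Der`-derivable.  The statement for all `σ`
makes the induction work: an arbitrary value for an eigenvariable is obtained by updating `σ`. -/
theorem G3KtD.toDer {R : RelSet} {Γ : Multiset LFml} (D : G3KtD (LabSt GP) R Γ) :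
    ∀ σ : Label → Label, Der GP (renR σ R) (renG σ Γ) := by
  induction D with
  | id R Γ x p =>
    intro σ
    exact .id (σ x) p (by simp [renG]) (by simp [renG])
  | orR R Γ x A B D ih =>
    intro σ
    have := ih σ
    simp only [renG, Multiset.map_cons] at this ⊢
    refine .log (.or _ A B) ?_
    rintro p rfl
    simpa using this
  | andR R Γ x A B D1 D2 ih1 ih2 =>
    intro σ
    have h1 := ih1 σ
    have h2 := ih2 σ
    simp only [renG, Multiset.map_cons] at h1 h2 ⊢
    refine .log (.and _ A B) ?_
    rintro p (rfl | rfl)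
    · simpa using h1
    · simpa using h2
  | boxR R Γ x y A hy D ih =>
    intro σ
    have hag : ∀ w z, occursLS z (R, (x, Formula.box A) ::ₘ Γ) → Function.update σ y w z = σ z :=
      fun w z hz => Function.update_of_ne (by rintro rfl; exact hy hz) _ _
    have hG : ∀ w, renG (Function.update σ y w) Γ = renG σ Γ := fun w =>
      renG_congr (R := R) fun z hz => hag w z (hz.imp (fun h => h) fun ⟨B, hB⟩ =>
        ⟨B, Multiset.mem_cons_of_mem hB⟩)
    have hx : ∀ w, Function.update σ y w x = σ x := fun w =>
      hag w x (.inr ⟨_, Multiset.mem_cons_self _ _⟩)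
    have : renG σ ((x, Formula.box A) ::ₘ Γ) = (σ x, Formula.box A) ::ₘ renG σ Γ := by simp [renG]
    rw [this]
    refine .log (.box _ A) ?_
    rintro p ⟨w, rfl⟩
    have h := ih (Function.update σ y w)
    have e1 : renR (Function.update σ y w) (insert (x, y) R) = renR σ R ∪ {(σ x, w)} := by
      rw [← renR_congr (hag w), Finset.union_comm, ← Finset.insert_eq]
      simp [renR, Finset.image_insert, hx]
    have e2 : renG (Function.update σ y w) ((y, A) ::ₘ Γ) = {(w, A)} + renG σ Γ := by
      rw [← hG w]
      simp [renG]
    rwa [e1, e2] at h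
  | bboxR R Γ x y A hy D ih =>
    intro σ
    have hag : ∀ w z, occursLS z (R, (x, Formula.bbox A) ::ₘ Γ) → Function.update σ y w z = σ z :=
      fun w z hz => Function.update_of_ne (by rintro rfl; exact hy hz) _ _
    have hG : ∀ w, renG (Function.update σ y w) Γ = renG σ Γ := fun w =>
      renG_congr (R := R) fun z hz => hag w z (hz.imp (fun h => h) fun ⟨B, hB⟩ =>
        ⟨B, Multiset.mem_cons_of_mem hB⟩)
    have hx : ∀ w, Function.update σ y w x = σ x := fun w =>
      hag w x (.inr ⟨_, Multiset.mem_cons_self _ _⟩)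
    have : renG σ ((x, Formula.bbox A) ::ₘ Γ) = (σ x, Formula.bbox A) ::ₘ renG σ Γ := by
      simp [renG]
    rw [this]
    refine .log (.bbox _ A) ?_
    rintro p ⟨w, rfl⟩
    have h := ih (Function.update σ y w)
    have e1 : renR (Function.update σ y w) (insert (y, x) R) = renR σ R ∪ {(w, σ x)} := by
      rw [← renR_congr (hag w), Finset.union_comm, ← Finset.insert_eq]
      simp [renR, Finset.image_insert, hx]
    have e2 : renG (Function.update σ y w) ((y, A) ::ₘ Γ) = {(w, A)} + renG σ Γ := by
      rw [← hG w]
      simp [renG]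
    rwa [e1, e2] at h
  | diaR R Γ x y A hxy D ih =>
    intro σ
    have h := ih σ
    simp only [renG, Multiset.map_cons] at h ⊢
    refine .log (.dia _ (σ y) A (Finset.mem_image_of_mem (fun p : Label × Label => (σ p.1, σ p.2)) hxy)) ?_
    rintro p rfl
    simpa using h
  | bdiaR R Γ x y A hxy D ih =>
    intro σ
    have h := ih σ
    simp only [renG, Multiset.map_cons] at h ⊢
    refine .log (.bdia _ (σ y) A (Finset.mem_image_of_mem (fun p : Label × Label => (σ p.1, σ p.2)) hxy)) ?_
    rintro p rfl
    simpa using h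
  | ext R' Γ' R Γ h D ih =>
    intro σ
    obtain ⟨gp, hgp, R0, Γ0, x, y, als, sls, hals, hsls, hconcl, hprem, hfresh⟩ := h
    rw [Prod.mk.injEq] at hprem
    obtain ⟨hR', hΓ'⟩ := hprem
    have hRΓ := hconcl
    rw [Prod.mk.injEq] at hRΓ
    obtain ⟨hR, hΓ⟩ := hRΓ
    rw [← hR] at hR'
    rw [hΓ', ← hΓ, hR'] at ih
    refine .ext hgp (hals.map σ) ?_ hsls ⟨σ, rfl, rfl⟩ fun f hfx hfy => ?_
    · rw [← renR_chain, hR]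
      exact Finset.image_subset_image Finset.subset_union_right
    -- labels of the new chain follow `f`; all labels of the conclusion still follow `σ`
    · have hag : ∀ z, occursLS z (R, Γ) → (fun z => if z ∈ sls then f z else σ z) z = σ z := by
        intro z hz
        by_cases hm : z ∈ sls
        · simp only [hm, if_true]
          by_cases h1 : z = x
          · rw [h1, hfx]
          by_cases h2 : z = y
          · rw [h2, hfy]
          exact absurd hz (hfresh z hm h1 h2)
        · simp only [hm, if_false]
      have h := ih fun z => if z ∈ sls then f z else σ z
      have hmap : sls.map (fun z => if z ∈ sls then f z else σ z) = sls.map f :=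
        List.map_congr_left fun z hz => by simp [hz]
      rwa [renG_congr hag, renR_union, renR_congr hag, renR_chain, hmap] at h

theorem Der.toG3 {R : RelSet} {Γ : Multiset LFml} (h : Der GP R Γ) :
    G3KtDeriv (LabSt GP) R Γ := by
  induction h with
  | @id R Γ x p h1 h2 =>
    obtain ⟨Γ1, rfl⟩ := Multiset.exists_cons_of_mem h1
    obtain ⟨Γ2, rfl⟩ := Multiset.exists_cons_of_mem
      ((Multiset.mem_cons.1 h2).resolve_left (by simp))
    exact ⟨.id R Γ2 x p⟩
  | @log R Γ F ps hd hp ih =>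
    cases hd with
    | or x A B =>
      obtain ⟨D⟩ := ih _ rfl
      exact ⟨.orR R Γ x A B (by simpa using D)⟩
    | and x A B =>
      obtain ⟨D1⟩ := ih _ (Set.mem_insert _ _)
      obtain ⟨D2⟩ := ih _ (Set.mem_insert_of_mem _ rfl)
      exact ⟨.andR R Γ x A B (by simpa using D1) (by simpa using D2)⟩
    | box x A =>
      obtain ⟨y, hy⟩ := exists_fresh (R, (x, Formula.box A) ::ₘ Γ)
      obtain ⟨D⟩ := ih _ ⟨y, rfl⟩
      refine ⟨.boxR R Γ x y A hy ?_⟩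
      rwa [Finset.union_comm, ← Finset.insert_eq, Multiset.singleton_add] at D
    | bbox x A =>
      obtain ⟨y, hy⟩ := exists_fresh (R, (x, Formula.bbox A) ::ₘ Γ)
      obtain ⟨D⟩ := ih _ ⟨y, rfl⟩
      refine ⟨.bboxR R Γ x y A hy ?_⟩
      rwa [Finset.union_comm, ← Finset.insert_eq, Multiset.singleton_add] at D
    | dia x y A hxy =>
      obtain ⟨D⟩ := ih _ rfl
      exact ⟨.diaR R Γ x y A hxy (by simpa using D)⟩
    | bdia x y A hxy =>
      obtain ⟨D⟩ := ih _ rfl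
      exact ⟨.bdiaR R Γ x y A hxy (by simpa using D)⟩
  | @ext R Γ gp hgp x y a b als tl hals hR htl hex hp ih =>
    obtain ⟨w, hw⟩ := exists_fresh (R, Γ)
    -- the inner labels need not be distinct, so a single fresh label serves for all of them
    obtain ⟨f, hfa, hfb, hf⟩ : ∃ f : Label → Label, f a = x ∧ f b = y ∧
        ∀ z, f z ≠ x → f z ≠ y → f z = w := by
      obtain ⟨g, hga, hgb⟩ := hex
      refine ⟨fun z => if z = a then x else if z = b then y else w, by simp, ?_, ?_⟩
      · by_cases hba : b = a
        · subst hba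
          simp [← hga, ← hgb]
        · simp [hba]
      · intro z
        by_cases h1 : z = a
        · simp [h1]
        · by_cases h2 : z = b
          · subst h2
            simp [h1]
          · simp [h1, h2]
    obtain ⟨D⟩ := ih f hfa hfb
    have hRe : R ∪ (chainAtoms gp.ant als).toFinset = R := Finset.union_eq_left.2 hR
    refine ⟨.ext _ _ R Γ ⟨gp, hgp, R, Γ, x, y, als, tl.map f, hals, ?_, ?_, ?_, ?_⟩ D⟩
    · rw [← hfa, ← hfb]
      exact htl.map f
    · rw [hRe]
    · rw [hRe]
    · intro z hz hzx hzy
      obtain ⟨u, -, rfl⟩ := List.mem_map.1 hz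
      rw [hf u hzx hzy]
      exact hw

theorem g3_iff_der {R : RelSet} {Γ : Multiset LFml} :
    G3KtDeriv (LabSt GP) R Γ ↔ Der GP R Γ := by
  refine ⟨fun ⟨D⟩ => ?_, Der.toG3⟩
  simpa [renR, renG] using G3KtD.toDer D id

end

/-- Lemma `g3ktstrucadmiss`: in `G3Kt + LabSt(GP)` the rules
    of substitution, contraction, weakening, and cut are admissible. -/
theorem g3kt_structural_admissibility (GP : Set GenPath) :
    -- substitution [x/y] (duplicate relational atoms are removed by `Finset.image`)
    (∀ (R : RelSet) (Γ : Multiset (Label × Formula)) (x y : Label),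
      G3KtDeriv (LabSt GP) R Γ →
      G3KtDeriv (LabSt GP)
        (R.image fun p => (subLabel x y p.1, subLabel x y p.2))
        (Γ.map fun p => (subLabel x y p.1, p.2))) ∧
    -- contraction
    (∀ (R : RelSet) (Γ Δ : Multiset (Label × Formula)),
      G3KtDeriv (LabSt GP) R (Γ + Δ + Δ) → G3KtDeriv (LabSt GP) R (Γ + Δ)) ∧
    -- weakening (with `R ∩ Q = ∅`)
    (∀ (R Q : RelSet) (Γ Δ : Multiset (Label × Formula)), Disjoint R Q →
      G3KtDeriv (LabSt GP) R Γ → G3KtDeriv (LabSt GP) (R ∪ Q) (Γ + Δ)) ∧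
    -- cut
    (∀ (R : RelSet) (Γ : Multiset (Label × Formula)) (x : Label) (A : Formula),
      G3KtDeriv (LabSt GP) R ((x, A) ::ₘ Γ) →
      G3KtDeriv (LabSt GP) R ((x, A.dual) ::ₘ Γ) →
      G3KtDeriv (LabSt GP) R Γ) := by
  refine ⟨fun R Γ x y ⟨D⟩ => ?_, fun R Γ Δ h => ?_, fun R Q Γ Δ _ h => ?_, fun R Γ x A h h' => ?_⟩
  · exact (D.toDer (subLabel x y)).toG3
  · rw [g3_iff_der] at h ⊢
    rw [add_comm Γ Δ]
    refine Ctr.multiset (fun F _ => ctr F.2 F.1) ?_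
    rwa [add_assoc, add_comm Γ, add_assoc] at h
  · rw [g3_iff_der] at h ⊢
    exact h.weaken Finset.subset_union_left Δ
  · rw [g3_iff_der] at h h' ⊢
    exact cut A x R Γ h h'
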